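/- (Unisolvence of the Adini element) If a polynomial p ∈ P_A satisfies p(a) = 0 and ∇p(a) = 0 (i.e. ∂p/∂x_k(a) = 0 for all 1 ≤ k ≤ d) at every vertex a of K, then p = 0. Consequently, an element of P_A is uniquely determined by its values and the values of its gradient at the 2^d vertices of K. -/

import Mathlib

open MvPolynomial MeasureTheory

/-- `Q₁`: the span of the monomials `x^α` with `α i ≤ 1` for every `i`. -/
noncomputable def Q1 (d : ℕ) : Submodule ℝ (MvPolynomial (Fin d) ℝ) :=
  Submodule.span ℝ {p | ∃ α : Fin d →₀ ℕ, (∀ i, α i ≤ 1) ∧ p = monomial α (1 : ℝ)}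

/-- The Adini shape function space `P_A = Q₁ + span{x_i² q : 1 ≤ i ≤ d, q ∈ Q₁}`. -/
noncomputable def PA (d : ℕ) : Submodule ℝ (MvPolynomial (Fin d) ℝ) :=
  Q1 d ⊔ Submodule.span ℝ {p | ∃ i : Fin d, ∃ q ∈ Q1 d, p = X i ^ 2 * q}

/-- `Q₁^i`: elements of `Q₁` of degree 0 in `x_i`. -/
noncomputable def Q1i (d : ℕ) (i : Fin d) : Submodule ℝ (MvPolynomial (Fin d) ℝ) :=
  Submodule.span ℝ
    {p | ∃ α : Fin d →₀ ℕ, (∀ j, α j ≤ 1) ∧ α i = 0 ∧ p = monomial α (1 : ℝ)}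

/-- `S^i = span{((x_j − c_j)² − h_j²) q̂ : 1 ≤ j ≤ d, q̂ ∈ Q₁^i}`. -/
noncomputable def Si (d : ℕ) (c h : Fin d → ℝ) (i : Fin d) :
    Submodule ℝ (MvPolynomial (Fin d) ℝ) :=
  Submodule.span ℝ
    {p | ∃ j : Fin d, ∃ q ∈ Q1i d i, p = ((X j - C (c j)) ^ 2 - C (h j ^ 2)) * q}

/-- The vertices of the `d`-rectangle with centre `c` and half-lengths `h`. -/
def IsVertex {d : ℕ} (c h : Fin d → ℝ) (a : Fin d → ℝ) : Prop :=
  ∀ i, a i = c i - h i ∨ a i = c i + h i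

/-- The `d`-rectangle `K = ∏_i [c_i − h_i, c_i + h_i]`. -/
def box {d : ℕ} (c h : Fin d → ℝ) : Set (Fin d → ℝ) :=
  Set.univ.pi fun i => Set.Icc (c i - h i) (c i + h i)

/-- The iterated partial derivative `∂^α`. -/
noncomputable def pderivPow {d : ℕ} (α : Fin d → ℕ) :
    MvPolynomial (Fin d) ℝ →ₗ[ℝ] MvPolynomial (Fin d) ℝ :=
  (List.ofFn fun i : Fin d =>
    ((pderiv (R := ℝ) i).toLinearMap :
        Module.End ℝ (MvPolynomial (Fin d) ℝ)) ^ α i).prod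

/-!
The bubble `bᵢ = (xᵢ - uᵢ) (xᵢ - vᵢ)` vanishes at every vertex of the box with opposite corners `u`
and `v`. Since `xᵢ² = bᵢ + (uᵢ + vᵢ) xᵢ - uᵢ vᵢ`, every Adini polynomial can be written as
`p = q₀ + ∑ i, bᵢ qᵢ` with `q₀` and all `qᵢ` in `Q₁`. At a vertex `a` the value of `p` is `q₀(a)`,
and once `q₀ = 0` its `k`-th partial derivative is `±(uₖ - vₖ) qₖ(a)`. So the vanishing of values
and gradients at the vertices reduces to the fact that an element of `Q₁` vanishing at all vertices
is zero.
-/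

open scoped Pointwise

section AdiniSpace

variable (σ R : Type*) [CommSemiring R]

/-- The Adini shape function space in the variables `σ` over `R`, where `Q₁` is Mathlib's
`restrictDegree σ R 1` and `X i ^ 2 • Q₁` is the image of `Q₁` under multiplication by `X i ^ 2`. -/
noncomputable def adiniSpace : Submodule R (MvPolynomial σ R) :=
  restrictDegree σ R 1 ⊔ ⨆ i : σ, (X i ^ 2 : MvPolynomial σ R) • restrictDegree σ R 1

variable {σ R}

theorem monomial_mem_restrictDegree {n : ℕ} {α : σ →₀ ℕ} (hα : ∀ i, α i ≤ n) (r : R) :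
    monomial α r ∈ restrictDegree σ R n :=
  (monomial_mem_restrictSupport R).2 (.inl hα)

end AdiniSpace

/-- The vertices of the box with opposite corners `u` and `v`. Corners are used in place of a centre
and half-lengths because they describe boxes over a ring of any characteristic. -/
def IsBoxVertex {σ R : Type*} (u v a : σ → R) : Prop :=
  ∀ i, a i = u i ∨ a i = v i

section Bubble

variable {σ R : Type*} [CommRing R] (u v : σ → R)

/-- The quadratic bubble in the variable `i`, vanishing at every vertex of the box with opposite
corners `u` and `v`. -/
noncomputable def bubble (i : σ) : MvPolynomial σ R :=
  (X i - C (u i)) * (X i - C (v i))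

theorem X_sq_mul_eq_bubble_mul_add_sub (i : σ) (q : MvPolynomial σ R) :
    X i ^ 2 * q = bubble u v i * q + (u i + v i) • (X i * q) - (u i * v i) • q := by
  simp only [bubble, smul_eq_C_mul, C_add, C_mul]
  ring

theorem X_sq_mul_mem_sup_bubble_smul {q : MvPolynomial σ R} (hq : q ∈ restrictDegree σ R 1) (i : σ)
    (hXq : X i * q ∈ restrictDegree σ R 1 ⊔ bubble u v i • restrictDegree σ R 1) :
    X i ^ 2 * q ∈ restrictDegree σ R 1 ⊔ bubble u v i • restrictDegree σ R 1 := by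
  rw [X_sq_mul_eq_bubble_mul_add_sub u v]
  have hbq := Submodule.smul_mem_pointwise_smul q (bubble u v i) _ hq
  exact sub_mem
    (add_mem (Submodule.mem_sup_right hbq) (Submodule.smul_mem _ _ hXq))
    (Submodule.smul_mem _ _ (Submodule.mem_sup_left hq))

theorem X_mul_monomial_mem_sup_bubble_smul {α : σ →₀ ℕ} (hα : ∀ j, α j ≤ 1) (r : R) (i : σ) :
    X i * monomial α r ∈ restrictDegree σ R 1 ⊔ bubble u v i • restrictDegree σ R 1 := by
  classical
  rcases Nat.eq_zero_or_pos (α i) with hi | hi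
  · rw [← pow_one (X i), ← monomial_single_add]
    refine Submodule.mem_sup_left (monomial_mem_restrictDegree (fun j => ?_) r)
    rcases eq_or_ne i j with rfl | hij
    · simp [hi]
    · simpa [hij] using hα j
  · obtain ⟨β, rfl⟩ := exists_add_of_le (Finsupp.single_le_iff.2 (Nat.succ_le_of_lt hi))
    have hβ : ∀ j, β j ≤ 1 := fun j => le_trans (by simp) (hα j)
    have hXβ : X i * monomial β r ∈ restrictDegree σ R 1 := by
      simpa only [monomial_single_add, pow_one] using monomial_mem_restrictDegree hα r
    rw [monomial_single_add, pow_one, ← mul_assoc, ← pow_two]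
    exact X_sq_mul_mem_sup_bubble_smul u v (monomial_mem_restrictDegree hβ r) i
      (Submodule.mem_sup_left hXβ)

theorem X_mul_mem_sup_bubble_smul {q : MvPolynomial σ R} (hq : q ∈ restrictDegree σ R 1) (i : σ) :
    X i * q ∈ restrictDegree σ R 1 ⊔ bubble u v i • restrictDegree σ R 1 := by
  suffices h : restrictDegree σ R 1 ≤
      (restrictDegree σ R 1 ⊔ bubble u v i • restrictDegree σ R 1).comap
        (LinearMap.mulLeft R (X i)) from h hq
  conv_lhs => rw [restrictDegree, restrictSupport_eq_span]
  refine Submodule.span_le.2 ?_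
  rintro _ ⟨α, hα, rfl⟩
  exact X_mul_monomial_mem_sup_bubble_smul u v hα 1 i

theorem adiniSpace_le_sup_iSup_bubble_smul :
    adiniSpace σ R ≤ restrictDegree σ R 1 ⊔ ⨆ i, bubble u v i • restrictDegree σ R 1 := by
  refine sup_le le_sup_left (iSup_le fun i => ?_)
  rintro _ ⟨q, hq, rfl⟩
  exact sup_le_sup_left (le_iSup (fun j => bubble u v j • restrictDegree σ R 1) i) _
    (X_sq_mul_mem_sup_bubble_smul u v hq i (X_mul_mem_sup_bubble_smul u v hq i))

theorem exists_eq_add_sum_bubble_mul [Fintype σ] {p : MvPolynomial σ R} (hp : p ∈ adiniSpace σ R) :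
    ∃ q₀ ∈ restrictDegree σ R 1, ∃ q : σ → MvPolynomial σ R,
      (∀ i, q i ∈ restrictDegree σ R 1) ∧ p = q₀ + ∑ i, bubble u v i * q i := by
  obtain ⟨q₀, hq₀, r, hr, rfl⟩ := Submodule.mem_sup.1 (adiniSpace_le_sup_iSup_bubble_smul u v hp)
  obtain ⟨f, hf, rfl⟩ := (Submodule.mem_iSup_iff_exists_finsupp _ _).1 hr
  choose q hq hqf using hf
  refine ⟨q₀, hq₀, q, hq, ?_⟩
  rw [Finsupp.sum_fintype _ _ fun _ => rfl]
  exact congrArg (q₀ + ·) (Fintype.sum_congr _ _ fun i => (hqf i).symm)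

variable {u v} {a : σ → R}

theorem eval_bubble_eq_zero (ha : IsBoxVertex u v a) (i : σ) : eval a (bubble u v i) = 0 := by
  rcases ha i with hai | hai <;> simp [bubble, hai]

theorem eval_pderiv_bubble_mul_self (ha : IsBoxVertex u v a) (k : σ) (q : MvPolynomial σ R) :
    eval a (pderiv k (bubble u v k * q)) = (2 * a k - u k - v k) * eval a q := by
  rw [pderiv_mul, map_add, map_mul, map_mul, eval_bubble_eq_zero ha, zero_mul, add_zero]
  congr 1
  simp only [bubble, Derivation.leibniz, map_sub, pderiv_X_self, derivation_C, sub_zero,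
    smul_eq_mul, mul_one, map_add, eval_X, eval_C]
  ring

theorem eval_pderiv_bubble_mul_of_ne (ha : IsBoxVertex u v a) {i k : σ} (hik : i ≠ k)
    (q : MvPolynomial σ R) : eval a (pderiv k (bubble u v i * q)) = 0 := by
  have hb : pderiv k (bubble u v i) = 0 := by simp [bubble, pderiv_X_of_ne hik]
  rw [pderiv_mul, hb, zero_mul, zero_add, map_mul, eval_bubble_eq_zero ha, zero_mul]

theorem eval_sum_bubble_mul_eq_zero [Fintype σ] (ha : IsBoxVertex u v a)
    (q : σ → MvPolynomial σ R) :
    eval a (∑ i, bubble u v i * q i) = 0 := by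
  simp [eval_bubble_eq_zero ha]

theorem eval_pderiv_sum_bubble_mul [Fintype σ] (ha : IsBoxVertex u v a)
    (q : σ → MvPolynomial σ R) (k : σ) :
    eval a (pderiv k (∑ i, bubble u v i * q i)) = (2 * a k - u k - v k) * eval a (q k) := by
  rw [map_sum, map_sum, Fintype.sum_eq_single k fun i hi => eval_pderiv_bubble_mul_of_ne ha hi _,
    eval_pderiv_bubble_mul_self ha]

theorem IsBoxVertex.two_mul_sub_sub_ne_zero (ha : IsBoxVertex u v a) {k : σ} (huv : u k ≠ v k) :
    2 * a k - u k - v k ≠ 0 := by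
  rcases ha k with hak | hak
  · rw [hak, two_mul, add_sub_cancel_right]
    exact sub_ne_zero.2 huv
  · rw [hak, two_mul, sub_right_comm, add_sub_cancel_right]
    exact sub_ne_zero.2 huv.symm

end Bubble

section Unisolvence

variable {σ R : Type*} [CommRing R] [IsDomain R] {u v : σ → R}

theorem eq_zero_of_mem_restrictDegree_one_of_eval_eq_zero [Finite σ] (huv : ∀ i, u i ≠ v i)
    {q : MvPolynomial σ R} (hq : q ∈ restrictDegree σ R 1)
    (hvert : ∀ a, IsBoxVertex u v a → eval a q = 0) : q = 0 := by
  classical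
  refine eq_zero_of_eval_zero_at_prod_finset q (fun i => {u i, v i}) (fun i => ?_) fun a ha => ?_
  · rw [Finset.card_pair (huv i), Nat.lt_succ_iff, degreeOf_le_iff]
    exact fun s hs => (mem_restrictDegree _ _ _).1 hq s hs i
  · exact hvert a fun i => by simpa using ha i

theorem eq_zero_of_mem_adiniSpace [Finite σ] (huv : ∀ i, u i ≠ v i)
    {p : MvPolynomial σ R} (hp : p ∈ adiniSpace σ R)
    (hvert : ∀ a, IsBoxVertex u v a → eval a p = 0 ∧ ∀ k, eval a (pderiv k p) = 0) : p = 0 := by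
  cases nonempty_fintype σ
  obtain ⟨q₀, hq₀, q, hq, rfl⟩ := exists_eq_add_sum_bubble_mul u v hp
  obtain rfl : q₀ = 0 := by
    refine eq_zero_of_mem_restrictDegree_one_of_eval_eq_zero huv hq₀ fun a ha => ?_
    simpa [eval_sum_bubble_mul_eq_zero ha] using (hvert a ha).1
  have hq_zero : ∀ k, q k = 0 := fun k => by
    refine eq_zero_of_mem_restrictDegree_one_of_eval_eq_zero huv (hq k) fun a ha => ?_
    have hgrad := (hvert a ha).2 k
    rw [zero_add, eval_pderiv_sum_bubble_mul ha] at hgrad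
    exact (mul_eq_zero.1 hgrad).resolve_left (ha.two_mul_sub_sub_ne_zero (huv k))
  simp [hq_zero]

theorem adini_unisolvence_general [Finite σ] (huv : ∀ i, u i ≠ v i) :
    (∀ p ∈ adiniSpace σ R,
      (∀ a, IsBoxVertex u v a → eval a p = 0 ∧ ∀ k, eval a (pderiv k p) = 0) → p = 0) ∧
    (∀ p₁ ∈ adiniSpace σ R, ∀ p₂ ∈ adiniSpace σ R,
      (∀ a, IsBoxVertex u v a →
        eval a p₁ = eval a p₂ ∧ ∀ k, eval a (pderiv k p₁) = eval a (pderiv k p₂)) →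
      p₁ = p₂) := by
  refine ⟨fun p => eq_zero_of_mem_adiniSpace huv, fun p₁ hp₁ p₂ hp₂ hvert => ?_⟩
  refine sub_eq_zero.1 (eq_zero_of_mem_adiniSpace huv (sub_mem hp₁ hp₂) fun a ha => ?_)
  simpa only [map_sub, sub_eq_zero] using hvert a ha

end Unisolvence

theorem Q1_eq_restrictDegree (d : ℕ) : Q1 d = restrictDegree (Fin d) ℝ 1 := by
  rw [Q1, restrictDegree, restrictSupport_eq_span]
  congr 1
  ext p
  simp only [Set.mem_image, Set.mem_ofPred_eq, eq_comm]

theorem PA_eq_adiniSpace (d : ℕ) : PA d = adiniSpace (Fin d) ℝ := by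
  rw [PA, adiniSpace, Q1_eq_restrictDegree]
  congr 1
  refine le_antisymm (Submodule.span_le.2 ?_) (iSup_le fun i => ?_)
  · rintro _ ⟨i, q, hq, rfl⟩
    exact Submodule.mem_iSup_of_mem i (Submodule.smul_mem_pointwise_smul q (X i ^ 2) _ hq)
  · rintro _ ⟨q, hq, rfl⟩
    exact Submodule.subset_span ⟨i, q, hq, rfl⟩

/-- unisolvence of the Adini element: a polynomial `p ∈ P_A` whose value
and gradient vanish at every vertex of `K` is zero; consequently, an element of `P_A`
is uniquely determined by the values of itself and of its gradient at the vertices. -/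
theorem adini_unisolvence (d : ℕ) (hd : 1 ≤ d) (c h : Fin d → ℝ) (hh : ∀ i, 0 < h i) :
    (∀ p ∈ PA d,
      (∀ a : Fin d → ℝ, IsVertex c h a →
        eval a p = 0 ∧ ∀ k : Fin d, eval a (pderiv k p) = 0) → p = 0) ∧
    (∀ p₁ ∈ PA d, ∀ p₂ ∈ PA d,
      (∀ a : Fin d → ℝ, IsVertex c h a →
        eval a p₁ = eval a p₂ ∧ ∀ k : Fin d, eval a (pderiv k p₁) = eval a (pderiv k p₂)) →
      p₁ = p₂) := by
  rw [PA_eq_adiniSpace]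
  exact adini_unisolvence_general fun i => (by linarith [hh i] : c i - h i < c i + h i).ne
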